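/- Assume the generalized-LFT setting: with W_1 = (M − P_1 H)^{-1} P_1 G and W_2 = (N − P_2 S)^{-1} P_2 K, define E = E_0 + F_1 W_1, A_xx = A_xx^0 + F_2 W_1, A_zx = A_zx^0 + F_4 W_1, A_xv = A_xv^0 + J_1 W_2, A_zv = A_zv^0 + J_3 W_2. Then for every complex λ_0, the matrix Θ(λ_0) = [[λ_0 E − A_xx, −A_xv],[−Φ A_zx, I_{M_v} − Φ A_zv]] has full column rank if and only if the matrix Θ_p(λ_0) = [[λ_0 E_0 − A_xx^0, λ_0 F_1 − F_2, −A_xv^0, −J_1],[−P_1 G, M − P_1 H, 0, 0],[0, 0, −P_2 K, N − P_2 S],[−Φ A_zx^0, −Φ F_4, I_{M_v} − Φ A_zv^0, −Φ J_3]] has full column rank. -/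

import Mathlib

/-!
Interleaving rows and columns turns `Θₚ(λ₀)` into a 2 × 2 block matrix whose lower right block
`diag(M - P₁H, N - P₂S)` is invertible by well-posedness, and whose Schur complement with respect to
that block is exactly `Θ(λ₀)`. Rank is additive over Schur complements, so the two matrices have the
same column-rank deficiency.
-/

section BlockRank

open Matrix

theorem finrank_submodule_prod {R V W : Type*} [Semiring R] [StrongRankCondition R]
    [AddCommMonoid V] [Module R V] [AddCommMonoid W] [Module R W]
    (S : Submodule R V) (T : Submodule R W) [Module.Free R S] [Module.Free R T]
    [Module.Finite R S] [Module.Finite R T] :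
    Module.finrank R (S.prod T) = Module.finrank R S + Module.finrank R T := by
  have range_eq : (S.subtype.prodMap T.subtype).range = S.prod T := by
    rw [LinearMap.range_prodMap, S.range_subtype, T.range_subtype]
  have inj : Function.Injective (S.subtype.prodMap T.subtype) :=
    S.subtype_injective.prodMap T.subtype_injective
  rw [← range_eq, LinearMap.finrank_range_of_inj inj, Module.finrank_prod]

variable {K m n p q : Type*} [Field K] [Fintype n] [Fintype q]

theorem rank_fromBlocks_zero₁₂_zero₂₁ (A : Matrix m n K) (D : Matrix p q K) :
    (fromBlocks A 0 0 D).rank = A.rank + D.rank := by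
  let e := LinearEquiv.sumArrowLequivProdArrow m p K K
  let f := LinearEquiv.sumArrowLequivProdArrow n q K K
  have factor : (fromBlocks A 0 0 D).mulVecLin =
      e.symm.toLinearMap ∘ₗ A.mulVecLin.prodMap D.mulVecLin ∘ₗ f.toLinearMap := by
    refine LinearMap.ext fun x => ?_
    rw [mulVecLin_apply, fromBlocks_mulVec]
    simp only [zero_mulVec, add_zero, zero_add]
    rfl
  rw [rank, factor, LinearMap.range_comp, LinearEquiv.finrank_map_eq,
    LinearMap.range_comp_of_range_eq_top _ f.range, LinearMap.range_prodMap,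
    finrank_submodule_prod, rank, rank]

theorem rank_fromBlocks_of_isUnit₂₂ [Finite m] [DecidableEq q] (A : Matrix m n K)
    (B : Matrix m q K) (C : Matrix q n K) {D : Matrix q q K} (hD : IsUnit D) :
    (fromBlocks A B C D).rank = (A - B * D⁻¹ * C).rank + Fintype.card q := by
  classical
  have := Fintype.ofFinite m
  let _ := hD.invertible
  rw [fromBlocks_eq_of_invertible₂₂, rank_mul_eq_left_of_isUnit_det _ _ (by simp),
    rank_mul_eq_right_of_isUnit_det _ _ (by simp), rank_fromBlocks_zero₁₂_zero₂₁,
    rank_of_isUnit D hD, invOf_eq_nonsing_inv]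

variable {R m₁ m₂ n₁ n₂ q₁ q₂ : Type*} [CommRing R]
  [Fintype q₁] [Fintype q₂] [DecidableEq q₁] [DecidableEq q₂]

theorem schurComplement_fromBlocks_of_diagonal
    (A₁₁ : Matrix m₁ n₁ R) (A₁₂ : Matrix m₁ n₂ R) (A₂₁ : Matrix m₂ n₁ R) (A₂₂ : Matrix m₂ n₂ R)
    (B₁₁ : Matrix m₁ q₁ R) (B₁₂ : Matrix m₁ q₂ R) (B₂₁ : Matrix m₂ q₁ R) (B₂₂ : Matrix m₂ q₂ R)
    (C₁ : Matrix q₁ n₁ R) (C₂ : Matrix q₂ n₂ R)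
    {D₁ : Matrix q₁ q₁ R} {D₂ : Matrix q₂ q₂ R} (hD₁ : IsUnit D₁) (hD₂ : IsUnit D₂) :
    fromBlocks A₁₁ A₁₂ A₂₁ A₂₂ -
        fromBlocks B₁₁ B₁₂ B₂₁ B₂₂ * (fromBlocks D₁ 0 0 D₂)⁻¹ * fromBlocks C₁ 0 0 C₂ =
      fromBlocks (A₁₁ - B₁₁ * D₁⁻¹ * C₁) (A₁₂ - B₁₂ * D₂⁻¹ * C₂)
        (A₂₁ - B₂₁ * D₁⁻¹ * C₁) (A₂₂ - B₂₂ * D₂⁻¹ * C₂) := by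
  rw [inv_fromBlocks_zero₁₂_of_isUnit_iff _ _ _ (iff_of_true hD₁ hD₂)]
  simp [fromBlocks_multiply, sub_eq_add_neg, fromBlocks_neg, fromBlocks_add]

theorem rank_interleaved_eq_rank_schurComplement_add_card
    [Finite m₁] [Finite m₂] [Fintype n₁] [Fintype n₂]
    (A₁₁ : Matrix m₁ n₁ K) (A₁₂ : Matrix m₁ n₂ K) (A₂₁ : Matrix m₂ n₁ K) (A₂₂ : Matrix m₂ n₂ K)
    (B₁₁ : Matrix m₁ q₁ K) (B₁₂ : Matrix m₁ q₂ K) (B₂₁ : Matrix m₂ q₁ K) (B₂₂ : Matrix m₂ q₂ K)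
    (C₁ : Matrix q₁ n₁ K) (C₂ : Matrix q₂ n₂ K)
    {D₁ : Matrix q₁ q₁ K} {D₂ : Matrix q₂ q₂ K} (hD₁ : IsUnit D₁) (hD₂ : IsUnit D₂) :
    (fromRows
      (fromCols (fromCols A₁₁ B₁₁) (fromCols A₁₂ B₁₂))
      (fromRows
        (fromCols (fromCols C₁ D₁) (fromCols 0 0))
        (fromRows
          (fromCols (fromCols 0 0) (fromCols C₂ D₂))
          (fromCols (fromCols A₂₁ B₂₁) (fromCols A₂₂ B₂₂))))).rank =
      (fromBlocks (A₁₁ - B₁₁ * D₁⁻¹ * C₁) (A₁₂ - B₁₂ * D₂⁻¹ * C₂)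
        (A₂₁ - B₂₁ * D₁⁻¹ * C₁) (A₂₂ - B₂₂ * D₂⁻¹ * C₂)).rank +
      (Fintype.card q₁ + Fintype.card q₂) := by
  let A := fromBlocks A₁₁ A₁₂ A₂₁ A₂₂
  let B := fromBlocks B₁₁ B₁₂ B₂₁ B₂₂
  let C := fromBlocks C₁ 0 0 C₂
  let D := fromBlocks D₁ 0 0 D₂
  let rows : m₁ ⊕ q₁ ⊕ q₂ ⊕ m₂ ≃ (m₁ ⊕ m₂) ⊕ q₁ ⊕ q₂ :=
    ((Equiv.refl m₁).sumCongr
      ((Equiv.sumAssoc q₁ q₂ m₂).symm.trans (Equiv.sumComm (q₁ ⊕ q₂) m₂))).trans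
      (Equiv.sumAssoc m₁ m₂ (q₁ ⊕ q₂)).symm
  have hD : IsUnit D := isUnit_fromBlocks_zero₁₂.2 ⟨hD₁, hD₂⟩
  calc
    _ = ((fromBlocks A B C D).submatrix rows (Equiv.sumSumSumComm n₁ q₁ n₂ q₂)).rank := by
      congr 1
      ext (_ | _ | _ | _) ((_ | _) | (_ | _)) <;> rfl
    _ = (fromBlocks A B C D).rank := rank_submatrix ..
    _ = (A - B * D⁻¹ * C).rank + (Fintype.card q₁ + Fintype.card q₂) := by
      rw [rank_fromBlocks_of_isUnit₂₂ A B C hD, Fintype.card_sum]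
    _ = _ := by rw [schurComplement_fromBlocks_of_diagonal _ _ _ _ _ _ _ _ _ _ hD₁ hD₂]

end BlockRank

theorem lft_regularity_pencil_iff_general {K m n v z q₁ q₂ r₁ r₂ : Type*} [Field K]
    [Finite m] [Fintype n] [Fintype v] [DecidableEq v] [Fintype z]
    [Fintype q₁] [DecidableEq q₁] [Fintype q₂] [DecidableEq q₂] [Fintype r₁] [Fintype r₂]
    (E₀ Axx₀ : Matrix m n K) (Axv₀ : Matrix m v K) (Azx₀ : Matrix z n K) (Azv₀ : Matrix z v K)
    (Φ : Matrix v z K) (F₁ F₂ : Matrix m q₁ K) (F₄ : Matrix z q₁ K)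
    (J₁ : Matrix m q₂ K) (J₃ : Matrix z q₂ K)
    (P₁ : Matrix q₁ r₁ K) (G : Matrix r₁ n K) (H : Matrix r₁ q₁ K) (M : Matrix q₁ q₁ K)
    (P₂ : Matrix q₂ r₂ K) (L : Matrix r₂ v K) (S : Matrix r₂ q₂ K) (N : Matrix q₂ q₂ K)
    (hwp₁ : IsUnit (M - P₁ * H)) (hwp₂ : IsUnit (N - P₂ * S))
    (W₁ : Matrix q₁ n K) (hW₁ : W₁ = (M - P₁ * H)⁻¹ * (P₁ * G))
    (W₂ : Matrix q₂ v K) (hW₂ : W₂ = (N - P₂ * S)⁻¹ * (P₂ * L))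
    (E Axx : Matrix m n K) (hE : E = E₀ + F₁ * W₁) (hAxx : Axx = Axx₀ + F₂ * W₁)
    (Azx : Matrix z n K) (hAzx : Azx = Azx₀ + F₄ * W₁)
    (Axv : Matrix m v K) (hAxv : Axv = Axv₀ + J₁ * W₂)
    (Azv : Matrix z v K) (hAzv : Azv = Azv₀ + J₃ * W₂) (lam₀ : K) :
    (Matrix.fromBlocks (lam₀ • E - Axx) (-Axv) (-(Φ * Azx)) (1 - Φ * Azv)).rank =
        Fintype.card n + Fintype.card v ↔
      (Matrix.fromRows
        (Matrix.fromCols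
          (Matrix.fromCols (lam₀ • E₀ - Axx₀) (lam₀ • F₁ - F₂))
          (Matrix.fromCols (-Axv₀) (-J₁)))
        (Matrix.fromRows
          (Matrix.fromCols (Matrix.fromCols (-(P₁ * G)) (M - P₁ * H)) (Matrix.fromCols 0 0))
          (Matrix.fromRows
            (Matrix.fromCols (Matrix.fromCols 0 0) (Matrix.fromCols (-(P₂ * L)) (N - P₂ * S)))
            (Matrix.fromCols
              (Matrix.fromCols (-(Φ * Azx₀)) (-(Φ * F₄)))
              (Matrix.fromCols (1 - Φ * Azv₀) (-(Φ * J₃))))))).rank =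
        Fintype.card n + Fintype.card q₁ + Fintype.card v + Fintype.card q₂ := by
  have schur_xx : lam₀ • E₀ - Axx₀ - (lam₀ • F₁ - F₂) * (M - P₁ * H)⁻¹ * -(P₁ * G) =
      lam₀ • E - Axx := by
    rw [Matrix.mul_assoc, Matrix.mul_neg, ← hW₁, hE, hAxx, Matrix.mul_neg, Matrix.sub_mul,
      Matrix.smul_mul, smul_add]
    abel
  have schur_xv : -Axv₀ - -J₁ * (N - P₂ * S)⁻¹ * -(P₂ * L) = -Axv := by
    rw [Matrix.mul_assoc, Matrix.mul_neg, ← hW₂, hAxv, Matrix.neg_mul, Matrix.mul_neg, neg_neg]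
    abel
  have schur_zx : -(Φ * Azx₀) - -(Φ * F₄) * (M - P₁ * H)⁻¹ * -(P₁ * G) = -(Φ * Azx) := by
    rw [Matrix.mul_assoc, Matrix.mul_neg, ← hW₁, hAzx, Matrix.neg_mul, Matrix.mul_neg, neg_neg,
      Matrix.mul_add, Matrix.mul_assoc]
    abel
  have schur_vv : 1 - Φ * Azv₀ - -(Φ * J₃) * (N - P₂ * S)⁻¹ * -(P₂ * L) = 1 - Φ * Azv := by
    rw [Matrix.mul_assoc, Matrix.mul_neg, ← hW₂, hAzv, Matrix.neg_mul, Matrix.mul_neg, neg_neg,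
      Matrix.mul_add, Matrix.mul_assoc]
    abel
  rw [rank_interleaved_eq_rank_schurComplement_add_card _ _ _ _ _ _ _ _ _ _ hwp₁ hwp₂,
    schur_xx, schur_xv, schur_zx, schur_vv]
  lia

/-- **Regularity pencil under generalized LFTs.** With `W₁ = (M − P₁H)⁻¹ P₁G`,
`W₂ = (N − P₂S)⁻¹ P₂K` and `E = E₀ + F₁W₁`, `Axx = Axx₀ + F₂W₁`, `Azx = Azx₀ + F₄W₁`,
`Axv = Axv₀ + J₁W₂`, `Azv = Azv₀ + J₃W₂`, for every complex `λ₀` the matrix `Θ(λ₀)` has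
full column rank iff the parameter-affine matrix `Θₚ(λ₀)` has full column rank. -/
theorem lft_regularity_pencil_iff
    (Mx Mv Mz q₁ q₂ r₁ r₂ : ℕ)
    (E₀ Axx₀ : Matrix (Fin Mx) (Fin Mx) ℂ)
    (Axv₀ : Matrix (Fin Mx) (Fin Mv) ℂ)
    (Azx₀ : Matrix (Fin Mz) (Fin Mx) ℂ)
    (Azv₀ : Matrix (Fin Mz) (Fin Mv) ℂ)
    (Φ : Matrix (Fin Mv) (Fin Mz) ℂ)
    (F₁ F₂ : Matrix (Fin Mx) (Fin q₁) ℂ)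
    (F₄ : Matrix (Fin Mz) (Fin q₁) ℂ)
    (J₁ : Matrix (Fin Mx) (Fin q₂) ℂ)
    (J₃ : Matrix (Fin Mz) (Fin q₂) ℂ)
    (P₁ : Matrix (Fin q₁) (Fin r₁) ℂ)
    (G : Matrix (Fin r₁) (Fin Mx) ℂ)
    (H : Matrix (Fin r₁) (Fin q₁) ℂ)
    (M : Matrix (Fin q₁) (Fin q₁) ℂ)
    (P₂ : Matrix (Fin q₂) (Fin r₂) ℂ)
    (K : Matrix (Fin r₂) (Fin Mv) ℂ)
    (S : Matrix (Fin r₂) (Fin q₂) ℂ)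
    (N : Matrix (Fin q₂) (Fin q₂) ℂ)
    (hwp₁ : IsUnit (M - P₁ * H)) (hwp₂ : IsUnit (N - P₂ * S))
    (W₁ : Matrix (Fin q₁) (Fin Mx) ℂ) (hW₁ : W₁ = (M - P₁ * H)⁻¹ * (P₁ * G))
    (W₂ : Matrix (Fin q₂) (Fin Mv) ℂ) (hW₂ : W₂ = (N - P₂ * S)⁻¹ * (P₂ * K))
    (E Axx : Matrix (Fin Mx) (Fin Mx) ℂ)
    (hE : E = E₀ + F₁ * W₁) (hAxx : Axx = Axx₀ + F₂ * W₁)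
    (Azx : Matrix (Fin Mz) (Fin Mx) ℂ) (hAzx : Azx = Azx₀ + F₄ * W₁)
    (Axv : Matrix (Fin Mx) (Fin Mv) ℂ) (hAxv : Axv = Axv₀ + J₁ * W₂)
    (Azv : Matrix (Fin Mz) (Fin Mv) ℂ) (hAzv : Azv = Azv₀ + J₃ * W₂)
    (lam₀ : ℂ) :
    (Matrix.fromBlocks (lam₀ • E - Axx) (-Axv)
        (-(Φ * Azx)) ((1 : Matrix (Fin Mv) (Fin Mv) ℂ) - Φ * Azv)).rank
      = Mx + Mv ↔
    (Matrix.fromRows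
      (Matrix.fromCols
        (Matrix.fromCols (lam₀ • E₀ - Axx₀) (lam₀ • F₁ - F₂))
        (Matrix.fromCols (-Axv₀) (-J₁)))
      (Matrix.fromRows
        (Matrix.fromCols
          (Matrix.fromCols (-(P₁ * G)) (M - P₁ * H))
          (Matrix.fromCols 0 0))
        (Matrix.fromRows
          (Matrix.fromCols
            (Matrix.fromCols 0 0)
            (Matrix.fromCols (-(P₂ * K)) (N - P₂ * S)))
          (Matrix.fromCols
            (Matrix.fromCols (-(Φ * Azx₀)) (-(Φ * F₄)))
            (Matrix.fromCols ((1 : Matrix (Fin Mv) (Fin Mv) ℂ) - Φ * Azv₀)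
              (-(Φ * J₃))))))).rank
      = Mx + q₁ + Mv + q₂ := by
  simpa only [Fintype.card_fin] using
    lft_regularity_pencil_iff_general E₀ Axx₀ Axv₀ Azx₀ Azv₀ Φ F₁ F₂ F₄ J₁ J₃ P₁ G H M P₂ K S N
      hwp₁ hwp₂ W₁ hW₁ W₂ hW₂ E Axx hE hAxx Azx hAzx Axv hAxv Azv hAzv lam₀
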